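/- arXiv:1506.08675 — 4 statements merged into one kernel-verified Lean document; each statement's English description precedes it below -/
import Mathlib

section
/- Let (M, ω) be an almost symplectic manifold and L an involutive Lagrangian distribution on M. Then the torsion tensor T^B of the Bott connection ∇^B in L, defined by T^B(X,Y) = ∇^B_X Y − ∇^B_Y X − [X,Y], satisfies dω(X, Y, Z) = ω(T^B(X,Y), Z) for all X, Y ∈ Γ(L) and Z ∈ Γ(TM). In particular, if ω is closed, then the Bott connection in L has zero torsion. -/
/-!
Subtract the two Bott identities, `ω(∇^B_X Y, Z) = X[ω(Y,Z)] - ω(Y,[X,Z])` and the one with `X`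
and `Y` exchanged, and subtract `ω([X,Y], Z)`: the result is Cartan's formula for `dω(X,Y,Z)`
with the single term `Z[ω(X,Y)]` missing. That term vanishes because `ω(X,Y) = 0` on an open set
when `X` and `Y` are tangent to an isotropic distribution.
-/

open Module Set
noncomputable section

variable {E : Type*} [NormedAddCommGroup E] [NormedSpace ℝ E]

/-- The field of 2-forms `ω` is skew-symmetric at every point of `U`. -/
def IsSkewOn (ω : E → E →L[ℝ] E →L[ℝ] ℝ) (U : Set E) : Prop :=
  ∀ x ∈ U, ∀ v : E, ω x v v = 0

/-- The field of 2-forms `ω` is nondegenerate at every point of `U`. -/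
def IsNondegOn (ω : E → E →L[ℝ] E →L[ℝ] ℝ) (U : Set E) : Prop :=
  ∀ x ∈ U, ∀ v : E, (∀ w : E, ω x v w = 0) → v = 0

/-- The exterior derivative `dω` of the 2-form field `ω`, evaluated at `x` on
the vectors `u, v, w` (constant vector fields have vanishing brackets). -/
def extDeriv2 (ω : E → E →L[ℝ] E →L[ℝ] ℝ) (x u v w : E) : ℝ :=
  fderiv ℝ (fun y => ω y v w) x u - fderiv ℝ (fun y => ω y u w) x v
    + fderiv ℝ (fun y => ω y u v) x w

/-- The 2-form field `ω` is closed on `U`. -/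
def IsClosed2On (ω : E → E →L[ℝ] E →L[ℝ] ℝ) (U : Set E) : Prop :=
  ∀ x ∈ U, ∀ u v w : E, extDeriv2 ω x u v w = 0

/-- Lie bracket of two vector fields. -/
def lieVF (X Y : E → E) (x : E) : E := fderiv ℝ Y x (X x) - fderiv ℝ X x (Y x)

/-- `X` is a smooth section over `U` of the distribution `L`, i.e. `X ∈ Γ(L)`. -/
def TangentTo (L : E → Submodule ℝ E) (U : Set E) (X : E → E) : Prop :=
  ContDiffOn ℝ (⊤ : ℕ∞) X U ∧ ∀ x ∈ U, X x ∈ L x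

/-- `(L_X (ω♭ Y)) x w = X[ω(Y, w)](x) − ω(Y, [X, w])(x)`: the right-hand side in the
characterization `ω(∇^B_X Y, Z) = X[ω(Y,Z)] − ω(Y,[X,Z])` of the Bott connection,
with `Z` frozen to the constant vector field `w` (the expression is tensorial in `Z`). -/
def bottRHS (ω : E → E →L[ℝ] E →L[ℝ] ℝ) (X Y : E → E) (x w : E) : ℝ :=
  fderiv ℝ (fun y => ω y (Y y) w) x (X x) + ω x (Y x) (fderiv ℝ X x w)

/-- `B = ∇^B_X Y` is the Bott covariant derivative of `Y` along `X`:
`ω♭ B = L_X (ω♭ Y)`, i.e. `ω(B, Z) = X[ω(Y,Z)] − ω(Y,[X,Z])` for every `Z`;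
equivalently `B = ω♯ L_X (ω♭ Y)`. -/
def IsBottDeriv (ω : E → E →L[ℝ] E →L[ℝ] ℝ) (U : Set E) (X Y B : E → E) : Prop :=
  ∀ x ∈ U, ∀ w : E, ω x (B x) w = bottRHS ω X Y x w

/-- The covariant derivative `∇_X Y` of the linear connection with Christoffel map `Γ`. -/
def covDeriv (Γ : E → E →L[ℝ] E →L[ℝ] E) (X Y : E → E) (x : E) : E :=
  fderiv ℝ Y x (X x) + Γ x (X x) (Y x)

/-- The connection `Γ` is torsion-free on `U`
(`T(X,Y) = ∇_X Y − ∇_Y X − [X,Y] = 0`; tensorially, `Γ` is symmetric). -/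
def IsTorsionFreeOn (Γ : E → E →L[ℝ] E →L[ℝ] E) (U : Set E) : Prop :=
  ∀ x ∈ U, ∀ u v : E, Γ x u v = Γ x v u

/-- The connection `Γ` parallelizes `ω` on `U`:
`X[ω(Y,Z)] = ω(∇_X Y, Z) + ω(Y, ∇_X Z)` (tensorially, on constant fields). -/
def IsSymplecticConnOn (ω : E → E →L[ℝ] E →L[ℝ] ℝ)
    (Γ : E → E →L[ℝ] E →L[ℝ] E) (U : Set E) : Prop :=
  ∀ x ∈ U, ∀ u v w : E,
    fderiv ℝ (fun y => ω y v w) x u = ω x (Γ x u v) w + ω x v (Γ x u w)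

/-- The connection `Γ` preserves the distribution `L` on `U`:
`∇_X Y ∈ Γ(L)` for every `X ∈ Γ(TM)` and `Y ∈ Γ(L)`. -/
def PreservesOn (Γ : E → E →L[ℝ] E →L[ℝ] E) (L : E → Submodule ℝ E) (U : Set E) : Prop :=
  ∀ Y : E → E, ContDiffOn ℝ (⊤ : ℕ∞) Y U → (∀ x ∈ U, Y x ∈ L x) →
    ∀ x ∈ U, ∀ u : E, fderiv ℝ Y x u + Γ x u (Y x) ∈ L x

/-- The Nijenhuis torsion of the (1,1)-tensor field `N`, evaluated at `x` on `u, v`: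
`T_N(X,Y) = [NX,NY] − N[NX,Y] − N[X,NY] + N²[X,Y]` (tensorial, on constant fields). -/
def nijTorsion (N : E → E →L[ℝ] E) (x u v : E) : E :=
  lieVF (fun y => N y u) (fun y => N y v) x
    - N x (lieVF (fun y => N y u) (fun _ => v) x)
    - N x (lieVF (fun _ => u) (fun y => N y v) x)
    + N x (N x (lieVF (fun _ => u) (fun _ => v) x))

/-- `I_k = (1/k) Tr (N^k)`. -/
def traceInv (N : E → E →L[ℝ] E) (k : ℕ) (x : E) : ℝ :=
  (k : ℝ)⁻¹ * LinearMap.trace ℝ E ((N x ^ k : E →L[ℝ] E) : E →ₗ[ℝ] E)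

section Leibniz

variable {𝕜 E F G H : Type*} [NontriviallyNormedField 𝕜]
  [NormedAddCommGroup E] [NormedSpace 𝕜 E] [NormedAddCommGroup F] [NormedSpace 𝕜 F]
  [NormedAddCommGroup G] [NormedSpace 𝕜 G] [NormedAddCommGroup H] [NormedSpace 𝕜 H]

theorem fderiv_clm_apply₂ {B : E → F →L[𝕜] G →L[𝕜] H} {V : E → F} {W : E → G} {x : E}
    (hB : DifferentiableAt 𝕜 B x) (hV : DifferentiableAt 𝕜 V x) (hW : DifferentiableAt 𝕜 W x)
    (z : E) :
    fderiv 𝕜 (fun y => B y (V y) (W y)) x z =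
      fderiv 𝕜 B x z (V x) (W x) + B x (fderiv 𝕜 V x z) (W x) + B x (V x) (fderiv 𝕜 W x z) := by
  rw [fderiv_clm_apply (hB.clm_apply hV) hW, fderiv_clm_apply hB hV]
  simp only [add_apply, ContinuousLinearMap.comp_apply, ContinuousLinearMap.flip_apply]
  abel

theorem fderiv_clm_apply₂_const {B : E → F →L[𝕜] G →L[𝕜] H} {x : E}
    (hB : DifferentiableAt 𝕜 B x) (v : F) (w : G) (z : E) :
    fderiv 𝕜 (fun y => B y v w) x z = fderiv 𝕜 B x z v w := by
  simpa using fderiv_clm_apply₂ hB (differentiableAt_const v) (differentiableAt_const w) z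

end Leibniz

section TwoForms

variable {ω : E → E →L[ℝ] E →L[ℝ] ℝ} {U : Set E} {X Y Z : E → E} {x : E}

theorem IsSkewOn.neg_apply_swap (hskew : IsSkewOn ω U) (hx : x ∈ U) (v w : E) :
    -ω x v w = ω x w v :=
  LinearMap.IsAlt.neg (B := (ω x).toLinearMap₁₂) (hskew x hx) v w

theorem lieVF_const_right (X : E → E) (z x : E) :
    lieVF X (fun _ => z) x = -fderiv ℝ X x z := by
  simp [lieVF]

theorem bottRHS_eq_sub_lieVF_const (ω : E → E →L[ℝ] E →L[ℝ] ℝ) (X Y : E → E) (x z : E) :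
    bottRHS ω X Y x z =
      fderiv ℝ (fun y => ω y (Y y) z) x (X x) - ω x (Y x) (lieVF X (fun _ => z) x) := by
  rw [bottRHS, lieVF_const_right, map_neg, sub_neg_eq_add]

theorem extDeriv2_eq_fderiv (hω : DifferentiableAt ℝ ω x) (u v w : E) :
    extDeriv2 ω x u v w = fderiv ℝ ω x u v w - fderiv ℝ ω x v u w + fderiv ℝ ω x w u v := by
  simp only [extDeriv2, fderiv_clm_apply₂_const hω]

theorem extDeriv2_apply_vectorFields (hω : DifferentiableAt ℝ ω x) (hskew : IsSkewOn ω U)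
    (hx : x ∈ U) (hX : DifferentiableAt ℝ X x) (hY : DifferentiableAt ℝ Y x)
    (hZ : DifferentiableAt ℝ Z x) :
    extDeriv2 ω x (X x) (Y x) (Z x) =
      fderiv ℝ (fun y => ω y (Y y) (Z y)) x (X x) - fderiv ℝ (fun y => ω y (X y) (Z y)) x (Y x)
        + fderiv ℝ (fun y => ω y (X y) (Y y)) x (Z x)
        - ω x (lieVF X Y x) (Z x) - ω x (Y x) (lieVF X Z x) + ω x (X x) (lieVF Y Z x) := by
  have hswap := hskew.neg_apply_swap hx (Y x) (fderiv ℝ X x (Z x))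
  rw [extDeriv2_eq_fderiv hω, fderiv_clm_apply₂ hω hY hZ, fderiv_clm_apply₂ hω hX hZ,
    fderiv_clm_apply₂ hω hX hY, ← hswap]
  simp only [lieVF, map_sub, sub_apply]
  ring

theorem extDeriv2_eq_bott_torsion_add_fderiv {BXY BYX : E → E} (hω : DifferentiableAt ℝ ω x)
    (hskew : IsSkewOn ω U) (hx : x ∈ U) (hX : DifferentiableAt ℝ X x)
    (hY : DifferentiableAt ℝ Y x) (hBXY : IsBottDeriv ω U X Y BXY)
    (hBYX : IsBottDeriv ω U Y X BYX) (z : E) :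
    extDeriv2 ω x (X x) (Y x) z =
      ω x (BXY x - BYX x - lieVF X Y x) z + fderiv ℝ (fun y => ω y (X y) (Y y)) x z := by
  rw [extDeriv2_apply_vectorFields hω hskew hx hX hY (differentiableAt_const z)]
  simp only [map_sub, sub_apply, hBXY x hx z, hBYX x hx z, bottRHS_eq_sub_lieVF_const]
  ring

theorem bott_torsion_vs_extDeriv_general (hU : IsOpen U) (hω : DifferentiableOn ℝ ω U)
    (hskew : IsSkewOn ω U) (hnd : IsNondegOn ω U)
    (hX : DifferentiableOn ℝ X U) (hY : DifferentiableOn ℝ Y U)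
    (hXY : ∀ x ∈ U, ω x (X x) (Y x) = 0) {BXY BYX : E → E}
    (hBXY : IsBottDeriv ω U X Y BXY) (hBYX : IsBottDeriv ω U Y X BYX) :
    (∀ x ∈ U, ∀ z : E,
      extDeriv2 ω x (X x) (Y x) z = ω x (BXY x - BYX x - lieVF X Y x) z) ∧
    (IsClosed2On ω U → ∀ x ∈ U, BXY x - BYX x - lieVF X Y x = 0) := by
  have htorsion : ∀ x ∈ U, ∀ z : E,
      extDeriv2 ω x (X x) (Y x) z = ω x (BXY x - BYX x - lieVF X Y x) z := by
    intro x hx z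
    have hxU : U ∈ nhds x := hU.mem_nhds hx
    have hpairing : fderiv ℝ (fun y => ω y (X y) (Y y)) x = 0 := by
      have hzero : (fun y => ω y (X y) (Y y)) =ᶠ[nhds x] 0 := Filter.eventuallyEq_of_mem hxU hXY
      rw [hzero.fderiv_eq, fderiv_zero, Pi.zero_apply]
    rw [extDeriv2_eq_bott_torsion_add_fderiv (hω.differentiableAt hxU) hskew hx
      (hX.differentiableAt hxU) (hY.differentiableAt hxU) hBXY hBYX, hpairing, zero_apply,
      add_zero]
  refine ⟨htorsion, fun hclosed x hx => hnd x hx _ fun z => ?_⟩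
  rw [← htorsion x hx z, hclosed x hx]

end TwoForms

/-- Let `(M, ω)` be an almost symplectic manifold and `L` an involutive
Lagrangian distribution on `M`.  Then the torsion tensor `T^B` of the Bott connection `∇^B`
in `L`, defined by `T^B(X,Y) = ∇^B_X Y − ∇^B_Y X − [X,Y]`, satisfies
`dω(X,Y,Z) = ω(T^B(X,Y), Z)` for all `X, Y ∈ Γ(L)` and `Z ∈ Γ(TM)`.
In particular, if `ω` is closed then the Bott connection in `L` has zero torsion. -/
theorem bott_torsion_vs_extDeriv
    {E : Type*} [NormedAddCommGroup E] [NormedSpace ℝ E] [FiniteDimensional ℝ E]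
    (U : Set E) (hU : IsOpen U)
    (ω : E → E →L[ℝ] E →L[ℝ] ℝ) (hωsm : ContDiffOn ℝ (⊤ : ℕ∞) ω U)
    (hskew : IsSkewOn ω U) (hnd : IsNondegOn ω U)
    (L : E → Submodule ℝ E)
    (hLag : ∀ x ∈ U, (∀ u ∈ L x, ∀ v ∈ L x, ω x u v = 0) ∧
      2 * finrank ℝ (L x) = finrank ℝ E)
    (hinv : ∀ X Y : E → E, TangentTo L U X → TangentTo L U Y →
      ∀ x ∈ U, lieVF X Y x ∈ L x)
    (X Y : E → E) (hX : TangentTo L U X) (hY : TangentTo L U Y)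
    (BXY BYX : E → E)
    (hBXY : IsBottDeriv ω U X Y BXY) (hBYX : IsBottDeriv ω U Y X BYX) :
    (∀ x ∈ U, ∀ z : E,
      extDeriv2 ω x (X x) (Y x) z = ω x (BXY x - BYX x - lieVF X Y x) z) ∧
    (IsClosed2On ω U → ∀ x ∈ U, BXY x - BYX x - lieVF X Y x = 0) := by
  exact bott_torsion_vs_extDeriv_general hU (hωsm.differentiableOn (by simp)) hskew hnd
    (hX.1.differentiableOn (by simp)) (hY.1.differentiableOn (by simp))
    (fun x hx => (hLag x hx).1 _ (hX.2 x hx) _ (hY.2 x hx)) hBXY hBYX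
end
end

section
/- Let (M, ω) be a 2n-dimensional symplectic manifold, U ⊆ M open, and f₁, …, f_n smooth functions on U pairwise in involution with linearly independent differentials, defining a Lagrangian foliation of U by their common level sets. Then for every smooth function g whose Hamiltonian vector field Y = ω♯·dg is tangent to the leaves of the foliation, and for every vector field X tangent to the leaves, the Bott connection satisfies ∇^B_X Y = ω♯ L_X (ω♭ Y) = 0; i.e., the Bott connection parallelizes all Hamiltonian vector fields tangent to the leaves. -/
/-!
Since `ω♭ Y = dg`, symmetry of the second derivative gives `L_X (ω♭ Y) = L_X dg = d (X g)`, and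
`X g = dg (X) = ω (Y, X)`. This function vanishes on `U`: the fields `X_{f_i}` span an isotropic
subspace of dimension `n`, and it lies in the common kernel of the `df_i = ω (X_{f_i}, ·)`, which
also has dimension `2n - n = n`. So the two coincide, and as `X` and `Y` take values in that kernel,
`Y` is at each point a combination of the `X_{f_i}`, and `ω (X_{f_i}, X) = df_i (X) = 0`.
-/

open Module Set
noncomputable section

variable {E : Type*} [NormedAddCommGroup E] [NormedSpace ℝ E]

open scoped Topology

section IsotropicFamily

variable {K V ι : Type*} [Field K] [AddCommGroup V] [Module K V] [FiniteDimensional K V]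
  [Fintype ι] {B : LinearMap.BilinForm K V} {e : ι → V}

lemma span_range_eq_dualCoannihilator_of_isotropic (hdim : finrank K V = 2 * Fintype.card ι)
    (hB : LinearIndependent K fun i => B (e i)) (hiso : ∀ i j, B (e i) (e j) = 0) :
    Submodule.span K (range e) =
      (Submodule.span K (range fun i => B (e i))).dualCoannihilator := by
  have hle : Submodule.span K (range e) ≤
      (Submodule.span K (range fun i => B (e i))).dualCoannihilator := by
    rw [← Submodule.le_dualAnnihilator_iff_le_dualCoannihilator, Submodule.span_le]
    rintro _ ⟨i, rfl⟩
    have hspan_le : Submodule.span K (range e) ≤ LinearMap.ker (B (e i)) :=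
      Submodule.span_le.2 (range_subset_iff.2 (hiso i))
    exact (Submodule.mem_dualAnnihilator _).2 hspan_le
  have hfinrank_span : finrank K (Submodule.span K (range e)) = Fintype.card ι :=
    finrank_span_eq_card (LinearIndependent.of_comp B hB)
  have hfinrank_ker := Subspace.finrank_add_finrank_dualCoannihilator_eq
    (Submodule.span K (range fun i => B (e i)))
  rw [finrank_span_eq_card hB] at hfinrank_ker
  exact Submodule.eq_of_le_of_finrank_eq hle (by lia)

lemma bilinForm_apply_eq_zero_of_isotropic (hdim : finrank K V = 2 * Fintype.card ι)
    (hB : LinearIndependent K fun i => B (e i)) (hiso : ∀ i j, B (e i) (e j) = 0)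
    {u v : V} (hu : ∀ i, B (e i) u = 0) (hv : ∀ i, B (e i) v = 0) : B u v = 0 := by
  have hu_mem : u ∈ Submodule.span K (range e) := by
    rw [span_range_eq_dualCoannihilator_of_isotropic hdim hB hiso,
      ← SetLike.mem_coe, Submodule.coe_dualCoannihilator_span]
    rintro _ ⟨i, rfl⟩
    exact hu i
  have hspan_le : Submodule.span K (range e) ≤ LinearMap.ker (B.flip v) :=
    Submodule.span_le.2 (range_subset_iff.2 hv)
  exact hspan_le hu_mem

end IsotropicFamily

-- The left-hand side is `L_X dg` evaluated on the constant vector field `w`.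
lemma lieDeriv_fderiv_eq_fderiv_fderiv_apply {𝕜 V F : Type*} [NontriviallyNormedField 𝕜]
    [NormedAddCommGroup V] [NormedSpace 𝕜 V] [NormedAddCommGroup F] [NormedSpace 𝕜 F]
    {g : V → F} {X : V → V} {x : V} (hdg : DifferentiableAt 𝕜 (fderiv 𝕜 g) x)
    (hsymm : IsSymmSndFDerivAt 𝕜 g x) (hX : DifferentiableAt 𝕜 X x) (w : V) :
    fderiv 𝕜 (fun y => fderiv 𝕜 g y w) x (X x) + fderiv 𝕜 g x (fderiv 𝕜 X x w) =
      fderiv 𝕜 (fun y => fderiv 𝕜 g y (X y)) x w := by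
  rw [fderiv_clm_apply hdg hX, fderiv_clm_apply hdg (differentiableAt_const w)]
  simp [hsymm.eq w (X x), add_comm]

lemma bottRHS_eq_fderiv_of_hamiltonian {ω : E → E →L[ℝ] E →L[ℝ] ℝ} {g : E → ℝ} {X Y : E → E}
    {x : E} (hg : ContDiffAt ℝ 2 g x) (hX : DifferentiableAt ℝ X x)
    (hY : (fun y => ω y (Y y)) =ᶠ[𝓝 x] fderiv ℝ g) (w : E) :
    bottRHS ω X Y x w = fderiv ℝ (fun y => ω y (Y y) (X y)) x w := by
  have hdg : DifferentiableAt ℝ (fderiv ℝ g) x :=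
    (hg.fderiv_right (m := 1) (by norm_num)).differentiableAt one_ne_zero
  have hsymm : IsSymmSndFDerivAt ℝ g x := hg.isSymmSndFDerivAt (by simp)
  have hYw : (fun y => ω y (Y y) w) =ᶠ[𝓝 x] fun y => fderiv ℝ g y w :=
    hY.mono fun y hy => congrArg (· w) hy
  have hYX : (fun y => ω y (Y y) (X y)) =ᶠ[𝓝 x] fun y => fderiv ℝ g y (X y) :=
    hY.mono fun y hy => congrArg (· (X y)) hy
  rw [bottRHS, hYw.fderiv_eq, hYX.fderiv_eq, hY.eq_of_nhds]
  exact lieDeriv_fderiv_eq_fderiv_fderiv_apply hdg hsymm hX w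

theorem bott_parallelizes_hamiltonian_general [FiniteDimensional ℝ E] {ι : Type*} [Fintype ι]
    (hdim : finrank ℝ E = 2 * Fintype.card ι) {U : Set E} (hU : IsOpen U)
    {ω : E → E →L[ℝ] E →L[ℝ] ℝ} {f : ι → E → ℝ} {Xf : ι → E → E}
    (hXf : ∀ i, ∀ x ∈ U, ∀ v : E, ω x (Xf i x) v = fderiv ℝ (f i) x v)
    (hinvol : ∀ i j, ∀ x ∈ U, ω x (Xf i x) (Xf j x) = 0)
    (hindep : ∀ x ∈ U, LinearIndependent ℝ (fun i => fderiv ℝ (f i) x))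
    {g : E → ℝ} (hg : ContDiffOn ℝ 2 g U)
    {Y : E → E} (hYham : ∀ x ∈ U, ∀ v : E, ω x (Y x) v = fderiv ℝ g x v)
    (hYtan : ∀ x ∈ U, ∀ i, fderiv ℝ (f i) x (Y x) = 0)
    {X : E → E} (hX : DifferentiableOn ℝ X U)
    (hXtan : ∀ x ∈ U, ∀ i, fderiv ℝ (f i) x (X x) = 0) :
    ∀ x ∈ U, ∀ w : E, bottRHS ω X Y x w = 0 := by
  intro x hx w
  have hUx : U ∈ 𝓝 x := hU.mem_nhds hx
  have hYX : ∀ y ∈ U, ω y (Y y) (X y) = 0 := by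
    intro y hy
    have hdf : (fun i => fderiv ℝ (f i) y) = fun i => ω y (Xf i y) :=
      funext fun i => (ContinuousLinearMap.ext (hXf i y hy)).symm
    have hB : LinearIndependent ℝ fun i => (ω y).toBilinForm (Xf i y) :=
      (hdf ▸ hindep y hy).map' (ContinuousLinearMap.coeLM ℝ)
        (LinearMap.ker_eq_bot.2 ContinuousLinearMap.coe_injective)
    exact bilinForm_apply_eq_zero_of_isotropic (B := (ω y).toBilinForm) hdim hB
      (fun i j => hinvol i j y hy)
      (fun i => (hXf i y hy _).trans (hYtan y hy i))
      (fun i => (hXf i y hy _).trans (hXtan y hy i))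
  have hYX_nhds : (fun y => ω y (Y y) (X y)) =ᶠ[𝓝 x] fun _ => 0 :=
    Filter.eventuallyEq_of_mem hUx hYX
  have hY_nhds : (fun y => ω y (Y y)) =ᶠ[𝓝 x] fderiv ℝ g :=
    Filter.eventuallyEq_of_mem hUx fun y hy => ContinuousLinearMap.ext (hYham y hy)
  rw [bottRHS_eq_fderiv_of_hamiltonian (hg.contDiffAt hUx) (hX.differentiableAt hUx) hY_nhds,
    hYX_nhds.fderiv_eq, fderiv_fun_const, Pi.zero_apply, zero_apply]

/-- Let `(M, ω)` be a `2n`-dimensional symplectic manifold, `U ⊆ M` open,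
and `f₁, …, f_n` smooth functions on `U` pairwise in involution with linearly independent
differentials, defining a Lagrangian foliation of `U` by their common level sets.  Then for
every smooth function `g` whose Hamiltonian vector field `Y = ω♯·dg` is tangent to the
leaves, and every vector field `X` tangent to the leaves, the Bott connection satisfies
`∇^B_X Y = ω♯ L_X (ω♭ Y) = 0`; by nondegeneracy of `ω` this is the statement
`L_X (ω♭ Y) = 0`, i.e. `X[ω(Y,Z)] − ω(Y,[X,Z]) = 0` for every `Z`. -/
theorem bott_parallelizes_hamiltonian
    {E : Type*} [NormedAddCommGroup E] [NormedSpace ℝ E] [FiniteDimensional ℝ E]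
    {n : ℕ} (hdim : finrank ℝ E = 2 * n)
    (U : Set E) (hU : IsOpen U)
    (ω : E → E →L[ℝ] E →L[ℝ] ℝ) (hωsm : ContDiffOn ℝ (⊤ : ℕ∞) ω U)
    (hskew : IsSkewOn ω U) (hnd : IsNondegOn ω U) (hcl : IsClosed2On ω U)
    (f : Fin n → E → ℝ) (hf : ∀ i, ContDiffOn ℝ (⊤ : ℕ∞) (f i) U)
    (Xf : Fin n → E → E)
    (hXf : ∀ i, ∀ x ∈ U, ∀ v : E, ω x (Xf i x) v = fderiv ℝ (f i) x v)
    (hinvol : ∀ i j, ∀ x ∈ U, ω x (Xf i x) (Xf j x) = 0)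
    (hindep : ∀ x ∈ U, LinearIndependent ℝ (fun i => fderiv ℝ (f i) x))
    (g : E → ℝ) (hg : ContDiffOn ℝ (⊤ : ℕ∞) g U)
    (Y : E → E) (hYsm : ContDiffOn ℝ (⊤ : ℕ∞) Y U)
    (hYham : ∀ x ∈ U, ∀ v : E, ω x (Y x) v = fderiv ℝ g x v)
    (hYtan : ∀ x ∈ U, ∀ i, fderiv ℝ (f i) x (Y x) = 0)
    (X : E → E) (hXsm : ContDiffOn ℝ (⊤ : ℕ∞) X U)
    (hXtan : ∀ x ∈ U, ∀ i, fderiv ℝ (f i) x (X x) = 0) :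
    ∀ x ∈ U, ∀ w : E, bottRHS ω X Y x w = 0 :=
  bott_parallelizes_hamiltonian_general (by simpa using hdim) hU hXf hinvol hindep
    (hg.of_le (by norm_cast)) hYham hYtan (hXsm.differentiableOn (by simp)) hXtan
end
end

section
/- Let (M, ω) be a 2n-dimensional symplectic manifold carrying a Lagrangian foliation with tangent distribution L, and suppose Y₁, …, Y_n are Hamiltonian vector fields tangent to the leaves that at each point span the tangent space to the leaf. Then the Bott connection ∇^B_X Y = ω♯ L_X (ω♭ Y) is the unique partial connection in L along L parallelizing all the vector fields Y₁, …, Y_n. -/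
open Module Set
noncomputable section

variable {E : Type*} [NormedAddCommGroup E] [NormedSpace ℝ E]

/-- `D` is a partial linear connection in `L` along `L` over `U`, acting on smooth
sections of `L` over `U`: it is local on `U`, takes values in `L`, is `C^∞(U)`-linear
in the first argument and a derivation in the second argument. -/
structure IsPartialConnOn (U : Set E) (L : E → Submodule ℝ E)
    (D : (E → E) → (E → E) → (E → E)) : Prop where
  localOn : ∀ X X' Y Y' : E → E, (∀ x ∈ U, X x = X' x) → (∀ x ∈ U, Y x = Y' x) →
    ∀ x ∈ U, D X Y x = D X' Y' x
  mem : ∀ X Y : E → E, TangentTo L U X → TangentTo L U Y → ∀ x ∈ U, D X Y x ∈ L x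
  addLeft : ∀ X X' Y : E → E, TangentTo L U X → TangentTo L U X' → TangentTo L U Y →
    ∀ x ∈ U, D (X + X') Y x = D X Y x + D X' Y x
  smulLeft : ∀ (f : E → ℝ) (X Y : E → E), ContDiffOn ℝ (⊤ : ℕ∞) f U →
    TangentTo L U X → TangentTo L U Y →
    ∀ x ∈ U, D (fun y => f y • X y) Y x = f x • D X Y x
  addRight : ∀ X Y Y' : E → E, TangentTo L U X → TangentTo L U Y → TangentTo L U Y' →
    ∀ x ∈ U, D X (Y + Y') x = D X Y x + D X Y' x
  leibniz : ∀ (f : E → ℝ) (X Y : E → E), ContDiffOn ℝ (⊤ : ℕ∞) f U →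
    TangentTo L U X → TangentTo L U Y →
    ∀ x ∈ U, D X (fun y => f y • Y y) x = f x • D X Y x + fderiv ℝ f x (X x) • Y x

/-- `D` parallelizes every Hamiltonian vector field tangent to the leaves
(i.e. tangent to the distribution `L`). -/
def ParallelizesHamOn (ω : E → E →L[ℝ] E →L[ℝ] ℝ) (U : Set E) (L : E → Submodule ℝ E)
    (D : (E → E) → (E → E) → (E → E)) : Prop :=
  ∀ (g : E → ℝ) (Yg : E → E), ContDiffOn ℝ (⊤ : ℕ∞) g U → ContDiffOn ℝ (⊤ : ℕ∞) Yg U →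
    (∀ x ∈ U, ∀ v : E, ω x (Yg x) v = fderiv ℝ g x v) →
    (∀ x ∈ U, Yg x ∈ L x) →
    ∀ X : E → E, TangentTo L U X → ∀ x ∈ U, D X Yg x = 0

/-!
By Cartan's formula, `L_X (ω♭ V) = ι_X d(ω♭ V) + d(ω(V, X))`. If `V` is Hamiltonian, then `ω♭ V` is
closed; if `V` and `X` are tangent to isotropic leaves, then `ω(V, X)` vanishes identically. So
Hamiltonian fields tangent to the leaves are Bott parallel.

If such fields `Vᵢ` form a frame of `L`, every section of `L` is `Y = ∑ fᵢ Vᵢ`. The `fᵢ` are smooth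
because a left inverse of the frame map `a ↦ ∑ aᵢ Vᵢ(x₀)` can be corrected to a smooth family of
left inverses near `x₀`. By the Leibniz rule, both the Bott derivative and any connection for which
the `Vᵢ` are parallel send `Y` to `∑ X(fᵢ) Vᵢ`.
-/

open Filter Topology

section FrameCoefficients

variable {𝕜 M F G ι : Type*} [NontriviallyNormedField 𝕜]
  [NormedAddCommGroup M] [NormedSpace 𝕜 M] [NormedAddCommGroup F] [NormedSpace 𝕜 F]
  [NormedAddCommGroup G] [NormedSpace 𝕜 G] {n : WithTop ℕ∞} {x₀ : M}

lemma exists_contDiffAt_leftInverse [CompleteSpace F] {T : M → F →L[𝕜] G}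
    (hT : ContDiffAt 𝕜 n T x₀) (hT₀ : (T x₀).HasLeftInverse) :
    ∃ S : M → G →L[𝕜] F, ContDiffAt 𝕜 n S x₀ ∧
      ∀ᶠ x in 𝓝 x₀, Function.LeftInverse (S x) (T x) := by
  obtain ⟨R, hR⟩ := hT₀
  have hRT : ContDiffAt 𝕜 n (fun x => R ∘L T x) x₀ := contDiffAt_const.clm_comp hT
  have hRT₀ : R ∘L T x₀ = ContinuousLinearEquiv.refl 𝕜 F := ContinuousLinearMap.ext hR
  have hinverse : ContDiffAt 𝕜 n (fun x => (R ∘L T x).inverse) x₀ :=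
    ContDiffAt.comp x₀ (g := ContinuousLinearMap.inverse)
      (ContinuousLinearMap.IsInvertible.contDiffAt_map_inverse ⟨_, hRT₀.symm⟩) hRT
  have hinvertible : ∀ᶠ x in 𝓝 x₀, (R ∘L T x).IsInvertible :=
    hRT.continuousAt.eventually_mem (hRT₀ ▸ ContinuousLinearEquiv.nhds _)
  refine ⟨fun x => (R ∘L T x).inverse ∘L R, hinverse.clm_comp contDiffAt_const, ?_⟩
  filter_upwards [hinvertible] with x hx a using hx.inverse_apply_self a

variable [SeparatingDual 𝕜 G]

lemma hasLeftInverse_of_injective_pi [Finite ι] {T : (ι → 𝕜) →L[𝕜] G}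
    (hT : Function.Injective T) : T.HasLeftInverse := by
  choose φ hφ using fun i : ι =>
    SeparatingDual.dualMap_surjective_iff.2 hT (LinearMap.proj i : (ι → 𝕜) →ₗ[𝕜] 𝕜)
  exact ⟨ContinuousLinearMap.pi φ, fun a => funext fun i => LinearMap.congr_fun (hφ i) a⟩

lemma contDiffAt_coeff_of_linearIndependent [CompleteSpace 𝕜] [Fintype ι]
    {V : ι → M → G} {c : M → ι → 𝕜}
    (hV : ∀ i, ContDiffAt 𝕜 n (V i) x₀) (hli : LinearIndependent 𝕜 (fun i => V i x₀))
    (hsum : ContDiffAt 𝕜 n (fun x => ∑ i, c x i • V i x) x₀) : ContDiffAt 𝕜 n c x₀ := by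
  let T : M → (ι → 𝕜) →L[𝕜] G := fun x =>
    ∑ i, (ContinuousLinearMap.proj (R := 𝕜) (φ := fun _ : ι => 𝕜) i).smulRight (V i x)
  have hT_apply : ∀ x a, T x a = ∑ i, a i • V i x := fun x a => by simp [T]
  have hT : ContDiffAt 𝕜 n T x₀ :=
    ContDiffAt.sum fun i _ => contDiffAt_const.smulRight (hV i)
  have hT₀ : Function.Injective (T x₀) := by
    have hT₀_eq : ⇑(T x₀) = Fintype.linearCombination 𝕜 (fun i => V i x₀) := funext (hT_apply x₀)
    exact hT₀_eq ▸ hli.fintypeLinearCombination_injective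
  obtain ⟨S, hS, hST⟩ := exists_contDiffAt_leftInverse hT (hasLeftInverse_of_injective_pi hT₀)
  refine (hS.clm_apply hsum).congr_of_eventuallyEq ?_
  filter_upwards [hST] with x hx
  rw [← hT_apply, hx]

end FrameCoefficients

section LieDerivative

variable {ω : E → E →L[ℝ] E →L[ℝ] ℝ} {X V : E → E} {x : E}

lemma bottRHS_congr {V' : E → E} (hV : V =ᶠ[𝓝 x] V') (w : E) :
    bottRHS ω X V x w = bottRHS ω X V' x w := by
  have hVw : (fun y => ω y (V y) w) =ᶠ[𝓝 x] fun y => ω y (V' y) w := by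
    filter_upwards [hV] with y hy using by rw [hy]
  rw [bottRHS, bottRHS, hVw.fderiv_eq, hV.eq_of_nhds]

lemma bottRHS_sum {ι : Type*} {V : ι → E → E} (s : Finset ι)
    (hV : ∀ i ∈ s, DifferentiableAt ℝ (fun y => ω y (V i y)) x) (w : E) :
    bottRHS ω X (fun y => ∑ i ∈ s, V i y) x w = ∑ i ∈ s, bottRHS ω X (V i) x w := by
  simp only [bottRHS, map_sum, sum_apply, Finset.sum_add_distrib]
  rw [fderiv_fun_sum fun i hi => (hV i hi).clm_apply (differentiableAt_const w), sum_apply]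

lemma bottRHS_smul {f : E → ℝ} (hf : DifferentiableAt ℝ f x)
    (hV : DifferentiableAt ℝ (fun y => ω y (V y)) x) (w : E) :
    bottRHS ω X (fun y => f y • V y) x w
      = f x * bottRHS ω X V x w + fderiv ℝ f x (X x) * ω x (V x) w := by
  simp only [bottRHS, map_smul, smul_apply, smul_eq_mul]
  rw [fderiv_fun_mul hf (hV.clm_apply (differentiableAt_const w))]
  simp only [add_apply, smul_apply, smul_eq_mul]
  ring

lemma bottRHS_sum_smul_of_parallel {ι : Type*} [Fintype ι] {V : ι → E → E} {f : ι → E → ℝ}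
    (hf : ∀ i, DifferentiableAt ℝ (f i) x)
    (hV : ∀ i, DifferentiableAt ℝ (fun y => ω y (V i y)) x)
    {w : E} (hpar : ∀ i, bottRHS ω X (V i) x w = 0) :
    bottRHS ω X (fun y => ∑ i, f i y • V i y) x w
      = ω x (∑ i, fderiv ℝ (f i) x (X x) • V i x) w := by
  have hfV : ∀ i ∈ Finset.univ, DifferentiableAt ℝ (fun y => ω y (f i y • V i y)) x :=
    fun i _ => by simpa only [map_smul] using (hf i).fun_smul (hV i)
  rw [bottRHS_sum _ hfV]
  simp only [bottRHS_smul (hf _) (hV _), hpar, mul_zero, zero_add, map_sum, map_smul, sum_apply,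
    smul_apply, smul_eq_mul]

/-- Cartan's formula `L_X α = ι_X dα + d(α(X))` for `α = ω♭ V`. -/
lemma bottRHS_eq_cartan (hV : DifferentiableAt ℝ (fun y => ω y (V y)) x)
    (hX : DifferentiableAt ℝ X x) (w : E) :
    bottRHS ω X V x w = fderiv ℝ (fun y => ω y (V y)) x (X x) w
      - fderiv ℝ (fun y => ω y (V y)) x w (X x) + fderiv ℝ (fun y => ω y (V y) (X y)) x w := by
  rw [bottRHS, fderiv_clm_apply hV (differentiableAt_const w), fderiv_clm_apply hV hX]
  simp only [fderiv_fun_const, Pi.zero_apply, ContinuousLinearMap.comp_zero, zero_add, add_apply,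
    ContinuousLinearMap.flip_apply, ContinuousLinearMap.comp_apply]
  ring

variable {h : E → ℝ}

lemma differentiableAt_flat_of_hamiltonian (hh : ContDiffAt ℝ 2 h x)
    (hham : (fun y => ω y (V y)) =ᶠ[𝓝 x] fderiv ℝ h) :
    DifferentiableAt ℝ (fun y => ω y (V y)) x :=
  ((hh.fderiv_right (m := 1) le_rfl).differentiableAt one_ne_zero).congr_of_eventuallyEq hham

lemma bottRHS_eq_zero_of_hamiltonian (hh : ContDiffAt ℝ 2 h x) (hX : DifferentiableAt ℝ X x)
    (hham : (fun y => ω y (V y)) =ᶠ[𝓝 x] fderiv ℝ h)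
    (hiso : ∀ᶠ y in 𝓝 x, ω y (V y) (X y) = 0) (w : E) : bottRHS ω X V x w = 0 := by
  have hclosed : fderiv ℝ (fderiv ℝ h) x (X x) w = fderiv ℝ (fderiv ℝ h) x w (X x) :=
    (hh.isSymmSndFDerivAt minSmoothness_of_isRCLikeNormedField.le).eq (X x) w
  have hconst : fderiv ℝ (fun y => ω y (V y) (X y)) x = 0 :=
    (EventuallyEq.fderiv_eq hiso).trans (fderiv_const_apply 0)
  rw [bottRHS_eq_cartan (differentiableAt_flat_of_hamiltonian hh hham) hX, hham.fderiv_eq,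
    hclosed, hconst, sub_self, zero_add, zero_apply]

end LieDerivative

section PartialConnection

variable {U : Set E} {L : E → Submodule ℝ E} {ι : Type*}

lemma TangentTo.smul {f : E → ℝ} {Y : E → E} (hf : ContDiffOn ℝ (⊤ : ℕ∞) f U)
    (hY : TangentTo L U Y) : TangentTo L U (fun y => f y • Y y) :=
  ⟨hf.smul hY.1, fun x hx => (L x).smul_mem _ (hY.2 x hx)⟩

lemma TangentTo.sum {Y : ι → E → E} {s : Finset ι} (hY : ∀ i ∈ s, TangentTo L U (Y i)) :
    TangentTo L U (fun y => ∑ i ∈ s, Y i y) :=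
  ⟨ContDiffOn.sum fun i hi => (hY i hi).1,
    fun x hx => (L x).sum_mem fun i hi => (hY i hi).2 x hx⟩

namespace IsPartialConnOn

variable {D : (E → E) → (E → E) → E → E} {X : E → E} {x : E}

lemma apply_zero (hD : IsPartialConnOn U L D) (hX : TangentTo L U X) (hx : x ∈ U) :
    D X 0 x = 0 := by
  have h0 : TangentTo L U 0 := ⟨contDiffOn_const, fun y _ => (L y).zero_mem⟩
  simpa using hD.addRight X 0 0 hX h0 h0 x hx

lemma apply_sum (hD : IsPartialConnOn U L D) (hX : TangentTo L U X) {Y : ι → E → E}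
    {s : Finset ι} (hY : ∀ i ∈ s, TangentTo L U (Y i)) (hx : x ∈ U) :
    D X (fun y => ∑ i ∈ s, Y i y) x = ∑ i ∈ s, D X (Y i) x := by
  classical
  induction s using Finset.induction_on with
  | empty => exact hD.apply_zero hX hx
  | insert i s hi ih =>
    rw [Finset.forall_mem_insert] at hY
    simp only [Finset.sum_insert hi]
    rw [← ih hY.2]
    exact hD.addRight X (Y i) _ hX hY.1 (TangentTo.sum hY.2) x hx

lemma apply_sum_smul_of_parallel [Fintype ι] (hD : IsPartialConnOn U L D) (hX : TangentTo L U X)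
    {V : ι → E → E} {f : ι → E → ℝ} (hf : ∀ i, ContDiffOn ℝ (⊤ : ℕ∞) (f i) U)
    (hV : ∀ i, TangentTo L U (V i)) (hx : x ∈ U) (hpar : ∀ i, D X (V i) x = 0) :
    D X (fun y => ∑ i, f i y • V i y) x = ∑ i, fderiv ℝ (f i) x (X x) • V i x := by
  rw [hD.apply_sum hX (fun i _ => (hV i).smul (hf i)) hx]
  refine Finset.sum_congr rfl fun i _ => ?_
  rw [hD.leibniz (f i) X (V i) (hf i) hX (hV i) x hx, hpar i, smul_zero, zero_add]

end IsPartialConnOn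

/-- `V` is a smooth frame over `U` of the distribution `L`: the fields `V i` are smooth on `U`, and
at each point of `U` their values form a basis of the fibre of `L`. -/
structure IsSmoothFrameOn (L : E → Submodule ℝ E) (U : Set E) (V : ι → E → E) : Prop where
  contDiffOn : ∀ i, ContDiffOn ℝ (⊤ : ℕ∞) (V i) U
  linearIndependent : ∀ x ∈ U, LinearIndependent ℝ (fun i => V i x)
  span_eq : ∀ x ∈ U, Submodule.span ℝ (Set.range fun i => V i x) = L x

namespace IsSmoothFrameOn

variable {V : ι → E → E}

lemma tangentTo (hV : IsSmoothFrameOn L U V) (i : ι) : TangentTo L U (V i) :=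
  ⟨hV.contDiffOn i, fun x hx => hV.span_eq x hx ▸ Submodule.subset_span (mem_range_self i)⟩

lemma of_finrank_eq [Fintype ι] (hV : ∀ i, ContDiffOn ℝ (⊤ : ℕ∞) (V i) U)
    (hspan : ∀ x ∈ U, Submodule.span ℝ (Set.range fun i => V i x) = L x)
    (hrank : ∀ x ∈ U, finrank ℝ (L x) = Fintype.card ι) : IsSmoothFrameOn L U V where
  contDiffOn := hV
  linearIndependent x hx := by
    rw [linearIndependent_iff_card_eq_finrank_span, Set.finrank, hspan x hx, hrank x hx]
  span_eq := hspan

lemma exists_coeff [Fintype ι] (hV : IsSmoothFrameOn L U V) (hU : IsOpen U) {Y : E → E}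
    (hY : TangentTo L U Y) :
    ∃ f : ι → E → ℝ, (∀ i, ContDiffOn ℝ (⊤ : ℕ∞) (f i) U) ∧
      ∀ x ∈ U, Y x = ∑ i, f i x • V i x := by
  have hspan : ∀ x ∈ U, ∃ c : ι → ℝ, ∑ i, c i • V i x = Y x := fun x hx =>
    (Submodule.mem_span_range_iff_exists_fun ℝ).1 (hV.span_eq x hx ▸ hY.2 x hx)
  choose! c hc using hspan
  have hc_smooth : ContDiffOn ℝ (⊤ : ℕ∞) c U := fun x hx =>
    (contDiffAt_coeff_of_linearIndependent
      (fun i => (hV.contDiffOn i).contDiffAt (hU.mem_nhds hx)) (hV.linearIndependent x hx)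
      ((hY.1.congr hc).contDiffAt (hU.mem_nhds hx))).contDiffWithinAt
  exact ⟨fun i x => c x i, contDiffOn_pi.1 hc_smooth, fun x hx => (hc x hx).symm⟩

end IsSmoothFrameOn

end PartialConnection

theorem bott_unique_parallelizing_frame_general {ι : Type*} [Finite ι] {U : Set E} (hU : IsOpen U)
    {ω : E → E →L[ℝ] E →L[ℝ] ℝ} {L : E → Submodule ℝ E}
    (hiso : ∀ x ∈ U, ∀ u ∈ L x, ∀ v ∈ L x, ω x u v = 0)
    {g : ι → E → ℝ} (hg : ∀ i, ContDiffOn ℝ (⊤ : ℕ∞) (g i) U)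
    {V : ι → E → E} (hV : IsSmoothFrameOn L U V)
    (hham : ∀ i, ∀ x ∈ U, ω x (V i x) = fderiv ℝ (g i) x) :
    (∀ X : E → E, TangentTo L U X → ∀ i, ∀ x ∈ U, ∀ w : E, bottRHS ω X (V i) x w = 0) ∧
    (∀ D : (E → E) → (E → E) → (E → E), IsPartialConnOn U L D →
      (∀ i, ∀ X : E → E, TangentTo L U X → ∀ x ∈ U, D X (V i) x = 0) →
      ∀ X Y : E → E, TangentTo L U X → TangentTo L U Y → ∀ x ∈ U, ∀ w : E,
        ω x (D X Y x) w = bottRHS ω X Y x w) := by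
  cases nonempty_fintype ι
  have hg₂ : ∀ i, ∀ x ∈ U, ContDiffAt ℝ 2 (g i) x := fun i x hx =>
    ((hg i).contDiffAt (hU.mem_nhds hx)).of_le (by norm_cast)
  have hflat : ∀ i, ∀ x ∈ U, (fun y => ω y (V i y)) =ᶠ[𝓝 x] fderiv ℝ (g i) := fun i x hx =>
    eventually_of_mem (hU.mem_nhds hx) (hham i)
  have hbott : ∀ X, TangentTo L U X → ∀ i, ∀ x ∈ U, ∀ w, bottRHS ω X (V i) x w = 0 :=
    fun X hX i x hx => bottRHS_eq_zero_of_hamiltonian (hg₂ i x hx)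
      ((hX.1.contDiffAt (hU.mem_nhds hx)).differentiableAt (by simp)) (hflat i x hx)
      (eventually_of_mem (hU.mem_nhds hx) fun y hy =>
        hiso y hy _ ((hV.tangentTo i).2 y hy) _ (hX.2 y hy))
  refine ⟨hbott, fun D hD hpar X Y hX hY x hx w => ?_⟩
  obtain ⟨f, hf, hYf⟩ := hV.exists_coeff hU hY
  calc ω x (D X Y x) w
      = ω x (∑ i, fderiv ℝ (f i) x (X x) • V i x) w := by
        rw [hD.localOn X X Y _ (fun _ _ => rfl) hYf x hx,
          hD.apply_sum_smul_of_parallel hX hf hV.tangentTo hx fun i => hpar i X hX x hx]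
    _ = bottRHS ω X (fun y => ∑ i, f i y • V i y) x w :=
        (bottRHS_sum_smul_of_parallel
          (fun i => ((hf i).contDiffAt (hU.mem_nhds hx)).differentiableAt (by simp))
          (fun i => differentiableAt_flat_of_hamiltonian (hg₂ i x hx) (hflat i x hx))
          fun i => hbott X hX i x hx w).symm
    _ = bottRHS ω X Y x w :=
        (bottRHS_congr (eventually_of_mem (hU.mem_nhds hx) hYf) w).symm

/-- Let `(M, ω)` be a `2n`-dimensional symplectic manifold carrying a
Lagrangian foliation with tangent distribution `L`, and suppose `Y₁, …, Y_n` are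
Hamiltonian vector fields tangent to the leaves that at each point span the tangent space
to the leaf.  Then the Bott connection `∇^B_X Y = ω♯ L_X (ω♭ Y)` is the unique partial
connection in `L` along `L` parallelizing all the vector fields `Y₁, …, Y_n`:
it parallelizes each `Y_i` (first conjunct: `ω♭(∇^B_X Y_i) = L_X(ω♭ Y_i) = 0`), and any
partial connection parallelizing each `Y_i` coincides with it (second conjunct). -/
theorem bott_unique_parallelizing_frame
    {E : Type*} [NormedAddCommGroup E] [NormedSpace ℝ E] [FiniteDimensional ℝ E]
    {n : ℕ} (hdim : finrank ℝ E = 2 * n)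
    (U : Set E) (hU : IsOpen U)
    (ω : E → E →L[ℝ] E →L[ℝ] ℝ) (hωsm : ContDiffOn ℝ (⊤ : ℕ∞) ω U)
    (hskew : IsSkewOn ω U) (hnd : IsNondegOn ω U) (hcl : IsClosed2On ω U)
    (L : E → Submodule ℝ E)
    (hLag : ∀ x ∈ U, (∀ u ∈ L x, ∀ v ∈ L x, ω x u v = 0) ∧ finrank ℝ (L x) = n)
    (hinv : ∀ X Y : E → E, TangentTo L U X → TangentTo L U Y →
      ∀ x ∈ U, lieVF X Y x ∈ L x)
    (g : Fin n → E → ℝ) (hg : ∀ i, ContDiffOn ℝ (⊤ : ℕ∞) (g i) U)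
    (Yf : Fin n → E → E) (hYsm : ∀ i, ContDiffOn ℝ (⊤ : ℕ∞) (Yf i) U)
    (hYham : ∀ i, ∀ x ∈ U, ∀ v : E, ω x (Yf i x) v = fderiv ℝ (g i) x v)
    (hYtan : ∀ i, ∀ x ∈ U, Yf i x ∈ L x)
    (hspan : ∀ x ∈ U, Submodule.span ℝ (Set.range fun i => Yf i x) = L x) :
    (∀ X : E → E, TangentTo L U X → ∀ i, ∀ x ∈ U, ∀ w : E, bottRHS ω X (Yf i) x w = 0) ∧
    (∀ D : (E → E) → (E → E) → (E → E), IsPartialConnOn U L D →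
      (∀ i, ∀ X : E → E, TangentTo L U X → ∀ x ∈ U, D X (Yf i) x = 0) →
      ∀ X Y : E → E, TangentTo L U X → TangentTo L U Y → ∀ x ∈ U, ∀ w : E,
        ω x (D X Y x) w = bottRHS ω X Y x w) := by
  have hframe : IsSmoothFrameOn L U Yf :=
    .of_finrank_eq hYsm hspan fun x hx => (hLag x hx).2.trans (Fintype.card_fin n).symm
  exact bott_unique_parallelizing_frame_general hU (fun x hx => (hLag x hx).1) hg hframe
    fun i x hx => ContinuousLinearMap.ext (hYham i x hx)
end
end

section
/- Let (M, ω, N) be an ωN manifold, and set I_k = (1/k) Tr(N^k) for k ≥ 1. Then the differentials of the functions I_k satisfy the Lenard recursion relation N* dI_k = dI_{k+1} for all k, where N* is the adjoint (transpose) of N acting on 1-forms. In particular, if N = ω₂♯ ω₁♭ is the recursion operator of two Magri-compatible symplectic forms ω₁ and ω₂, then ω₂♯ · dI_k = ω₁♯ · dI_{k+1}. -/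
/-!
Write `D_u` for the derivative of `N` at a point in the direction `u`, and let `S_u` be the operator
`v ↦ D_v u`. On constant vector fields the vanishing of the Nijenhuis torsion reads
`D_{Nu} - N D_u = S_u N - N S_u`. After multiplication by `N ^ (k - 1)` the right-hand side is
traceless by cyclicity, so `Tr(N ^ (k - 1) D_{Nu}) = Tr(N ^ k D_u)`. Since
`dI_k(u) = Tr(N ^ (k - 1) D_u)`, this is the Lenard recursion.

For the second claim, `ω₂(Nu, v) = ω₁(u, v)` and skew-symmetry of both forms give
`ω₂(z, Nv) = ω₁(z, v)`, so that `ω₂♭ z = dI_k` implies `ω₁♭ z = N* dI_k = dI_{k+1}`.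
-/

open Module Set
noncomputable section

variable {E : Type*} [NormedAddCommGroup E] [NormedSpace ℝ E]

section Tracial

lemma map_pow_mul_eq_of_sub_eq_commutator {R M F : Type*} [Ring R] [AddGroup M] [FunLike F R M]
    [AddMonoidHomClass F R M] {τ : F} (hτ : ∀ a b : R, τ (a * b) = τ (b * a)) {a b c s : R}
    (h : b - a * c = s * a - a * s) (n : ℕ) : τ (a ^ n * b) = τ (a ^ (n + 1) * c) := by
  have hcomm : τ (a ^ n * (s * a - a * s)) = 0 := by
    rw [mul_sub, map_sub, ← mul_assoc, ← mul_assoc, hτ _ a, ← mul_assoc, ← pow_succ', ← pow_succ,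
      sub_self]
  rw [← sub_eq_zero, ← map_sub, pow_succ, mul_assoc, ← mul_sub, h, hcomm]

/-- By cyclicity, the `n` terms of the noncommutative Leibniz rule for `f ^ n` contribute
equally. -/
lemma hasFDerivAt_tracial_pow {𝕜 V A F : Type*} [NontriviallyNormedField 𝕜]
    [NormedAddCommGroup V] [NormedSpace 𝕜 V] [NormedRing A] [NormedAlgebra 𝕜 A]
    [NormedAddCommGroup F] [NormedSpace 𝕜 F] {τ : A →L[𝕜] F} (hτ : ∀ a b, τ (a * b) = τ (b * a))
    {f : V → A} {f' : V →L[𝕜] A} {x : V} (hf : HasFDerivAt f f' x) (n : ℕ) :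
    HasFDerivAt (fun y => τ (f y ^ n)) (n • τ ∘L (f x ^ (n - 1) • f')) x := by
  refine (τ.hasFDerivAt.comp x (hf.fun_pow' n)).congr_fderiv ?_
  ext u
  have hterm : ∀ i ∈ Finset.range n,
      τ (f x ^ (n - 1 - i) * (f' u * f x ^ i)) = τ (f x ^ (n - 1) * f' u) := by
    intro i hi
    have hin : i + (n - 1 - i) = n - 1 := by
      have := Finset.mem_range.mp hi
      omega
    rw [← mul_assoc, hτ, ← mul_assoc, ← pow_add, hin]
  simpa [mul_assoc] using Finset.sum_congr rfl hterm

end Tracial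

section Trace

/-- The trace of continuous endomorphisms of a finite-dimensional space, bundled as a continuous
linear functional so that it can be composed with derivatives. -/
def traceCLM (𝕜 V : Type*) [NontriviallyNormedField 𝕜] [CompleteSpace 𝕜] [NormedAddCommGroup V]
    [NormedSpace 𝕜 V] [FiniteDimensional 𝕜 V] : (V →L[𝕜] V) →L[𝕜] 𝕜 :=
  (LinearMap.trace 𝕜 V ∘ₗ ContinuousLinearMap.coeLM 𝕜).toContinuousLinearMap

lemma traceCLM_mul_comm {𝕜 V : Type*} [NontriviallyNormedField 𝕜] [CompleteSpace 𝕜]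
    [NormedAddCommGroup V] [NormedSpace 𝕜 V] [FiniteDimensional 𝕜 V] (S T : V →L[𝕜] V) :
    traceCLM 𝕜 V (S * T) = traceCLM 𝕜 V (T * S) :=
  LinearMap.trace_mul_comm 𝕜 (S : V →ₗ[𝕜] V) (T : V →ₗ[𝕜] V)

end Trace

lemma isAdjointPair_swap_of_isAlt {R M M' P : Type*} [CommRing R] [AddCommGroup M] [Module R M]
    [AddCommGroup M'] [Module R M'] [AddCommGroup P] [Module R P]
    {B : M →ₗ[R] M →ₗ[R] P} {B' : M' →ₗ[R] M' →ₗ[R] P} (hB : B.IsAlt) (hB' : B'.IsAlt)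
    {f : M → M'} {g : M' → M} (h : LinearMap.IsAdjointPair B B' f g) :
    LinearMap.IsAdjointPair B' B g f := fun y x => by
  rw [← hB.neg, ← h x y, hB'.neg]

section Nijenhuis

variable {N : E → E →L[ℝ] E} {x : E}

lemma nijTorsion_eq (hN : DifferentiableAt ℝ N x) (u v : E) :
    nijTorsion N x u v =
      (fderiv ℝ N x (N x u) - N x * fderiv ℝ N x u
        - ((fderiv ℝ N x).flip u * N x - N x * (fderiv ℝ N x).flip u)) v := by
  have hD (a b : E) : fderiv ℝ (fun y => N y a) x b = fderiv ℝ N x b a := by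
    simp [fderiv_clm_apply hN (differentiableAt_const a)]
  simp only [nijTorsion, lieVF, hD, fderiv_const_apply, zero_apply, zero_sub, sub_zero, map_neg,
    map_zero, add_zero, sub_apply, mul_apply_eq_comp, ContinuousLinearMap.flip_apply]
  abel

lemma fderiv_sub_mul_eq_commutator (hN : DifferentiableAt ℝ N x) {u : E}
    (hT : ∀ v, nijTorsion N x u v = 0) :
    fderiv ℝ N x (N x u) - N x * fderiv ℝ N x u =
      (fderiv ℝ N x).flip u * N x - N x * (fderiv ℝ N x).flip u :=
  sub_eq_zero.mp <| ContinuousLinearMap.ext fun v => (nijTorsion_eq hN u v).symm.trans (hT v)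

variable [FiniteDimensional ℝ E]

lemma fderiv_traceInv_apply (hN : DifferentiableAt ℝ N x) {k : ℕ} (hk : k ≠ 0) (u : E) :
    fderiv ℝ (traceInv N k) x u = traceCLM ℝ E (N x ^ (k - 1) * fderiv ℝ N x u) := by
  have hdef : traceInv N k = fun y => (k : ℝ)⁻¹ * traceCLM ℝ E (N y ^ k) := rfl
  have htr := hasFDerivAt_tracial_pow traceCLM_mul_comm hN.hasFDerivAt k
  rw [hdef, (htr.const_mul _).fderiv, ← Nat.cast_smul_eq_nsmul ℝ,
    inv_smul_smul₀ (Nat.cast_ne_zero.mpr hk)]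
  rfl

lemma fderiv_traceInv_succ (hN : DifferentiableAt ℝ N x) (hT : ∀ u v, nijTorsion N x u v = 0)
    {k : ℕ} (hk : k ≠ 0) :
    fderiv ℝ (traceInv N (k + 1)) x = fderiv ℝ (traceInv N k) x ∘L N x := by
  ext u
  have htr := map_pow_mul_eq_of_sub_eq_commutator (τ := traceCLM ℝ E) traceCLM_mul_comm
    (fderiv_sub_mul_eq_commutator hN (hT u)) (k - 1)
  rw [Nat.sub_one_add_one hk] at htr
  rw [ContinuousLinearMap.comp_apply, fderiv_traceInv_apply hN k.succ_ne_zero,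
    fderiv_traceInv_apply hN hk, htr, Nat.succ_sub_one]

theorem lenard_recursion_general (hN : DifferentiableAt ℝ N x)
    (hNij : ∀ u v : E, nijTorsion N x u v = 0) :
    (∀ k : ℕ, 1 ≤ k → ∀ v : E,
      fderiv ℝ (traceInv N (k + 1)) x v = fderiv ℝ (traceInv N k) x (N x v)) ∧
    (∀ ω₁ ω₂ : E →L[ℝ] E →L[ℝ] ℝ, (∀ v, ω₁ v v = 0) → (∀ v, ω₂ v v = 0) →
      (∀ u v, ω₂ (N x u) v = ω₁ u v) →
      ∀ k : ℕ, 1 ≤ k → ∀ z : E,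
        (∀ v, ω₂ z v = fderiv ℝ (traceInv N k) x v) →
        (∀ v, ω₁ z v = fderiv ℝ (traceInv N (k + 1)) x v)) := by
  have hrec (k : ℕ) (hk : 1 ≤ k) (v : E) :
      fderiv ℝ (traceInv N (k + 1)) x v = fderiv ℝ (traceInv N k) x (N x v) := by
    rw [fderiv_traceInv_succ hN hNij (Nat.one_le_iff_ne_zero.mp hk), ContinuousLinearMap.comp_apply]
  refine ⟨hrec, fun ω₁ ω₂ hω₁ hω₂ hrel k hk z hz v => ?_⟩
  have hadj : ω₁ z v = ω₂ z (N x v) :=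
    isAdjointPair_swap_of_isAlt (B := ω₁.toBilinForm) (B' := ω₂.toBilinForm) hω₁ hω₂
      (f := N x) (g := id) hrel z v
  rw [hadj, hz, hrec k hk v]

end Nijenhuis

/-- Let `(M, ω, N)` be an `ωN` manifold (`ω` symplectic, `N` a
(1,1)-tensor field with vanishing Nijenhuis torsion, compatible with `ω`:
`ω♭N = N*ω♭`, i.e. `ω(Nu,v) = ω(u,Nv)`, and `Ω = ω(N·,·)` closed), and set
`I_k = (1/k) Tr(N^k)`.  Then `N* dI_k = dI_{k+1}` for all `k ≥ 1` (Lenard recursion).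
In particular, if `N = ω₂♯ ω₁♭` is the recursion operator of two Magri-compatible
symplectic forms `ω₁ = ω` and `ω₂` (i.e. `ω₂(Nu,v) = ω₁(u,v)`), then
`ω₂♯ · dI_k = ω₁♯ · dI_{k+1}`. -/
theorem lenard_recursion
    {E : Type*} [NormedAddCommGroup E] [NormedSpace ℝ E] [FiniteDimensional ℝ E]
    (U : Set E) (hU : IsOpen U)
    (ω : E → E →L[ℝ] E →L[ℝ] ℝ) (hωsm : ContDiffOn ℝ (⊤ : ℕ∞) ω U)
    (hskew : IsSkewOn ω U) (hnd : IsNondegOn ω U) (hcl : IsClosed2On ω U)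
    (N : E → E →L[ℝ] E) (hNsm : ContDiffOn ℝ (⊤ : ℕ∞) N U)
    (hNij : ∀ x ∈ U, ∀ u v : E, nijTorsion N x u v = 0)
    (hcompat : ∀ x ∈ U, ∀ u v : E, ω x (N x u) v = ω x u (N x v))
    (hΩcl : IsClosed2On (fun y => (ω y).comp (N y)) U) :
    (∀ k : ℕ, 1 ≤ k → ∀ x ∈ U, ∀ v : E,
      fderiv ℝ (traceInv N (k + 1)) x v = fderiv ℝ (traceInv N k) x (N x v)) ∧
    (∀ ω₂ : E → E →L[ℝ] E →L[ℝ] ℝ, ContDiffOn ℝ (⊤ : ℕ∞) ω₂ U → IsSkewOn ω₂ U →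
      IsNondegOn ω₂ U → IsClosed2On ω₂ U →
      (∀ x ∈ U, ∀ u v : E, ω₂ x (N x u) v = ω x u v) →
      ∀ k : ℕ, 1 ≤ k → ∀ x ∈ U, ∀ z : E,
        (∀ v : E, ω₂ x z v = fderiv ℝ (traceInv N k) x v) →
        (∀ v : E, ω x z v = fderiv ℝ (traceInv N (k + 1)) x v)) := by
  have hloc (x : E) (hx : x ∈ U) := lenard_recursion_general
    ((hNsm.contDiffAt (hU.mem_nhds hx)).differentiableAt (by simp)) (hNij x hx)
  exact ⟨fun k hk x hx => (hloc x hx).1 k hk, fun ω₂ _ hskew₂ _ _ hrel k hk x hx =>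
    (hloc x hx).2 (ω x) (ω₂ x) (hskew x hx) (hskew₂ x hx) (hrel x hx) k hk⟩
end
end
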